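/- Let k₁, k₂ : ℝ × ℝ → ℝ be smooth functions satisfying (k₁)_t = (k₂)ₛₛ − ½(k₁² − k₂²)k₂ and (k₂)_t = (k₁)ₛₛ − ½(k₁² − k₂²)k₁. Then the pair of functions q = (1/√2)(k₁ + k₂) and r = −(1/√2)(k₁ − k₂) is a solution of the non-linear heat system: q_t = q_ss + q²r and r_t = −r_ss − r²q. -/

import Mathlib

noncomputable section

open Real

/-- Minkowski 3-space: ℝ³ as a vector type. -/
abbrev V3 : Type := Fin 3 → ℝ

/-- Lorentzian inner product ⟨x,y⟩_L = −x₁y₁ + x₂y₂ + x₃y₃ on ℝ³. -/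
def lor (x y : V3) : ℝ := -(x 0 * y 0) + x 1 * y 1 + x 2 * y 2

/-- Lorentzian cross product x ×_L y = (x₃y₂ − x₂y₃, x₃y₁ − x₁y₃, x₁y₂ − x₂y₁). -/
def lcross (x y : V3) : V3 :=
  ![x 2 * y 1 - x 1 * y 2, x 2 * y 0 - x 0 * y 2, x 0 * y 1 - x 1 * y 0]

/-- Partial derivative with respect to the first variable `s`. -/
def pds {E : Type*} [NormedAddCommGroup E] [NormedSpace ℝ E]
    (f : ℝ × ℝ → E) (p : ℝ × ℝ) : E := deriv (fun s => f (s, p.2)) p.1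

/-- Partial derivative with respect to the second variable `t`. -/
def pdt {E : Type*} [NormedAddCommGroup E] [NormedSpace ℝ E]
    (f : ℝ × ℝ → E) (p : ℝ × ℝ) : E := deriv (fun t => f (p.1, t)) p.2

/-!
In the light-cone variables `u = k₁ + k₂`, `w = -(k₁ - k₂)` one has `k₁² - k₂² = -u w`, so adding
and subtracting the two equations decouples the linear part and leaves the nonlinear heat system
with coupling constant `1 / 2`. Since the nonlinearity is cubic, rescaling both unknowns by `c`
divides the coupling constant by `c²`; the factor `1 / √2` therefore normalises it to `1`.
-/

section PartialDerivatives

variable {E : Type*} [NormedAddCommGroup E] [NormedSpace ℝ E] {f g : ℝ × ℝ → E}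

theorem hasDerivAt_slice_fst {p : ℝ × ℝ} (hf : DifferentiableAt ℝ f p) :
    HasDerivAt (fun s => f (s, p.2)) (fderiv ℝ f p (1, 0)) p.1 :=
  hf.hasFDerivAt.comp_hasDerivAt p.1 ((hasDerivAt_id p.1).prodMk (hasDerivAt_const p.1 p.2))

theorem hasDerivAt_slice_snd {p : ℝ × ℝ} (hf : DifferentiableAt ℝ f p) :
    HasDerivAt (fun t => f (p.1, t)) (fderiv ℝ f p (0, 1)) p.2 :=
  hf.hasFDerivAt.comp_hasDerivAt p.2 ((hasDerivAt_const p.2 p.1).prodMk (hasDerivAt_id p.2))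

theorem pds_eq_fderiv (hf : Differentiable ℝ f) : pds f = fun p => fderiv ℝ f p (1, 0) :=
  funext fun p => (hasDerivAt_slice_fst (hf p)).deriv

theorem pdt_eq_fderiv (hf : Differentiable ℝ f) : pdt f = fun p => fderiv ℝ f p (0, 1) :=
  funext fun p => (hasDerivAt_slice_snd (hf p)).deriv

theorem contDiff_pds {n : WithTop ℕ∞} (hf : ContDiff ℝ (n + 1) f) : ContDiff ℝ n (pds f) := by
  rw [pds_eq_fderiv (hf.differentiable (by simp))]
  exact (hf.fderiv_right le_rfl).clm_apply contDiff_const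

theorem pds_add (hf : Differentiable ℝ f) (hg : Differentiable ℝ g) :
    pds (f + g) = pds f + pds g := by
  ext p
  simp [pds_eq_fderiv, hf, hg, hf.add hg, fderiv_add (hf p) (hg p)]

theorem pdt_add (hf : Differentiable ℝ f) (hg : Differentiable ℝ g) :
    pdt (f + g) = pdt f + pdt g := by
  ext p
  simp [pdt_eq_fderiv, hf, hg, hf.add hg, fderiv_add (hf p) (hg p)]

theorem pds_sub (hf : Differentiable ℝ f) (hg : Differentiable ℝ g) :
    pds (f - g) = pds f - pds g := by
  ext p
  simp [pds_eq_fderiv, hf, hg, hf.sub hg, fderiv_sub (hf p) (hg p)]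

theorem pdt_sub (hf : Differentiable ℝ f) (hg : Differentiable ℝ g) :
    pdt (f - g) = pdt f - pdt g := by
  ext p
  simp [pdt_eq_fderiv, hf, hg, hf.sub hg, fderiv_sub (hf p) (hg p)]

theorem pds_const_smul (c : ℝ) (f : ℝ × ℝ → E) : pds (c • f) = c • pds f :=
  funext fun p => deriv_fun_const_smul_field c fun s => f (s, p.2)

theorem pdt_const_smul (c : ℝ) (f : ℝ × ℝ → E) : pdt (c • f) = c • pdt f :=
  funext fun p => deriv_fun_const_smul_field c fun t => f (p.1, t)

theorem pds_pds_add (hf : ContDiff ℝ 2 f) (hg : ContDiff ℝ 2 g) :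
    pds (pds (f + g)) = pds (pds f) + pds (pds g) := by
  rw [pds_add (hf.differentiable two_ne_zero) (hg.differentiable two_ne_zero),
    pds_add ((contDiff_pds hf).differentiable one_ne_zero)
      ((contDiff_pds hg).differentiable one_ne_zero)]

theorem pds_pds_sub (hf : ContDiff ℝ 2 f) (hg : ContDiff ℝ 2 g) :
    pds (pds (f - g)) = pds (pds f) - pds (pds g) := by
  rw [pds_sub (hf.differentiable two_ne_zero) (hg.differentiable two_ne_zero),
    pds_sub ((contDiff_pds hf).differentiable one_ne_zero)
      ((contDiff_pds hg).differentiable one_ne_zero)]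

end PartialDerivatives

section Systems

variable {A : Type*} [NormedCommRing A] [NormedAlgebra ℝ A] {k₁ k₂ q r : ℝ × ℝ → A}

/-- The evolution system `(k₁)_t = (k₂)ₛₛ − ½(k₁² − k₂²)k₂`, `(k₂)_t = (k₁)ₛₛ − ½(k₁² − k₂²)k₁` of
a pair of curvatures, for functions with values in a commutative normed algebra. -/
structure IsCurvatureSolution (k₁ k₂ : ℝ × ℝ → A) : Prop where
  pdt_fst : pdt k₁ = pds (pds k₂) - (1 / 2 : ℝ) • ((k₁ ^ 2 - k₂ ^ 2) * k₂)
  pdt_snd : pdt k₂ = pds (pds k₁) - (1 / 2 : ℝ) • ((k₁ ^ 2 - k₂ ^ 2) * k₁)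

/-- The nonlinear heat system `q_t = q_ss + κ q²r`, `r_t = −r_ss − κ r²q`. The coupling constant
`κ`, equal to `1` in the classical system, keeps track of rescalings of the unknowns. -/
structure IsNonlinearHeatSolution (κ : ℝ) (q r : ℝ × ℝ → A) : Prop where
  pdt_fst : pdt q = pds (pds q) + κ • (q ^ 2 * r)
  pdt_snd : pdt r = -pds (pds r) - κ • (r ^ 2 * q)

theorem IsNonlinearHeatSolution.const_smul {κ c : ℝ}
    (h : IsNonlinearHeatSolution (κ * c ^ 2) q r) :
    IsNonlinearHeatSolution κ (c • q) (c • r) where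
  pdt_fst := by
    simp only [pdt_const_smul, pds_const_smul, h.pdt_fst, smul_pow, smul_mul_smul_comm]
    module
  pdt_snd := by
    simp only [pdt_const_smul, pds_const_smul, h.pdt_snd, smul_pow, smul_mul_smul_comm]
    module

theorem IsCurvatureSolution.isNonlinearHeatSolution_add_sub (h : IsCurvatureSolution k₁ k₂)
    (hk₁ : ContDiff ℝ 2 k₁) (hk₂ : ContDiff ℝ 2 k₂) :
    IsNonlinearHeatSolution (1 / 2) (k₁ + k₂) (k₂ - k₁) where
  pdt_fst := by
    have cubic : (k₁ ^ 2 - k₂ ^ 2) * k₂ + (k₁ ^ 2 - k₂ ^ 2) * k₁ =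
        -((k₁ + k₂) ^ 2 * (k₂ - k₁)) := by ring
    rw [pdt_add (hk₁.differentiable two_ne_zero) (hk₂.differentiable two_ne_zero),
      pds_pds_add hk₁ hk₂, h.pdt_fst, h.pdt_snd]
    linear_combination (norm := module) (-(1 / 2) : ℝ) • cubic
  pdt_snd := by
    have cubic : (k₁ ^ 2 - k₂ ^ 2) * k₁ - (k₁ ^ 2 - k₂ ^ 2) * k₂ =
        (k₂ - k₁) ^ 2 * (k₁ + k₂) := by ring
    rw [pdt_sub (hk₂.differentiable two_ne_zero) (hk₁.differentiable two_ne_zero),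
      pds_pds_sub hk₂ hk₁, h.pdt_fst, h.pdt_snd]
    linear_combination (norm := module) (-(1 / 2) : ℝ) • cubic

theorem statement14_general (h : IsCurvatureSolution k₁ k₂)
    (hk₁ : ContDiff ℝ 2 k₁) (hk₂ : ContDiff ℝ 2 k₂) :
    IsNonlinearHeatSolution 1 ((1 / √2) • (k₁ + k₂)) (-(1 / √2) • (k₁ - k₂)) := by
  have coupling : 1 * (1 / √2) ^ 2 = 1 / 2 := by simp
  rw [neg_smul, ← smul_neg, neg_sub]
  exact .const_smul (coupling ▸ h.isNonlinearHeatSolution_add_sub hk₁ hk₂)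

end Systems

/-- If smooth `k₁, k₂ : ℝ × ℝ → ℝ` satisfy
`(k₁)_t = (k₂)ₛₛ − ½(k₁² − k₂²)k₂` and `(k₂)_t = (k₁)ₛₛ − ½(k₁² − k₂²)k₁`, then
`q = (1/√2)(k₁ + k₂)` and `r = −(1/√2)(k₁ − k₂)` solve the nonlinear heat system
`q_t = q_ss + q²r`, `r_t = −r_ss − r²q`. -/
theorem statement14 (k₁ k₂ : ℝ × ℝ → ℝ)
    (hk₁ : ContDiff ℝ (⊤ : ℕ∞) k₁) (hk₂ : ContDiff ℝ (⊤ : ℕ∞) k₂)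
    (e₁ : ∀ p, pdt k₁ p = pds (pds k₂) p - (k₁ p ^ 2 - k₂ p ^ 2) / 2 * k₂ p)
    (e₂ : ∀ p, pdt k₂ p = pds (pds k₁) p - (k₁ p ^ 2 - k₂ p ^ 2) / 2 * k₁ p)
    (q r : ℝ × ℝ → ℝ)
    (hq : ∀ p, q p = (1 / Real.sqrt 2) * (k₁ p + k₂ p))
    (hr : ∀ p, r p = -(1 / Real.sqrt 2) * (k₁ p - k₂ p)) :
    (∀ p, pdt q p = pds (pds q) p + q p ^ 2 * r p) ∧
    (∀ p, pdt r p = -(pds (pds r) p) - r p ^ 2 * q p) := by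
  have hq_eq : q = (1 / √2) • (k₁ + k₂) := funext hq
  have hr_eq : r = -(1 / √2) • (k₁ - k₂) := funext hr
  have curvature : IsCurvatureSolution k₁ k₂ := by
    constructor <;> ext p <;>
      simp only [e₁, e₂, Pi.sub_apply, Pi.smul_apply, Pi.mul_apply, Pi.pow_apply, smul_eq_mul] <;>
      ring
  have heat : IsNonlinearHeatSolution 1 q r := hq_eq ▸ hr_eq ▸
    statement14_general curvature (hk₁.of_le (by norm_cast)) (hk₂.of_le (by norm_cast))
  exact ⟨fun p => by simpa using congrFun heat.pdt_fst p,
    fun p => by simpa using congrFun heat.pdt_snd p⟩
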